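/- Let q be a prime power with q ≡ 1 (mod 4), let ζ be a square root of -1 in F_q, let C_5 = {0, 1, -1, ζ, -ζ}, and let χ₂ be the quadratic character of F_q (the multiplicative character of order 2, extended by χ₂(0) = 0). Then the sum S(2;q,5) = Σ_{γ ∈ F_q \ C_5} Π_{α ∈ C_5} (1 - χ₂(γ - α)) satisfies S(2;q,5) ≥ q - 49√q - 160. -/

import Mathlib

open Finset

/-!
Write `χ` for the quadratic character. Expanding the product reduces the claim to the bounds
`|∑ₓ χ(∏_{a ∈ t} (x - a))| ≤ (#t - 1) √q` for the nonempty `t ⊆ C₅`. For `#t = 2` the sum is `-1`,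
and the substitution `x = a + u⁻¹` with `a ∈ t` turns the case `#t = 4` into the case `#t = 3`.
For `t = C₅` it is `∑ₓ χ(x (x⁴ + c))` with `c = -1`. The square of this sum does not change when
`c` is multiplied by a nonzero fourth power, so it is bounded by the second moment over all `c`,
which the orthogonality relation `∑_c χ(x⁴ + c) χ(y⁴ + c) = q [x⁴ = y⁴] - 1` evaluates.

The case `#t = 3` is Hasse's theorem, by Manin's argument. Over `F(X)` the twist `f(X) y² = f(x)`
of the curve `y² = f(x)` has the points `P = (X ^ q, f ^ ((q - 1) / 2))` and `±Q = (X, ±1)`. The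
height `h` of the `x`-coordinate satisfies the parallelogram law, because the forms which compute
the `x`-coordinates of `P ± Q` from those of `P` and `Q` have no common zero. Here `h(P) = q` and
`h(Q) = 1`, and cancelling the common zeros at the `x ∈ F` with `χ(f(x)) = ±1` or `f(x) = 0` gives
`h(P ± Q) ≤ q + 1 ∓ S` with `S = ∑ₓ χ(f(x))`. These are equalities by the parallelogram law, and
the Cauchy–Schwarz inequality for the quadratic form `h` becomes `S² ≤ 4q`.
-/

open Polynomial
open scoped nonZeroDivisors

/-! ### Heights over the rational function field -/

section MaxDegree

section Semiring

variable {R ι : Type*} [Semiring R] [Fintype ι]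

/-- The largest degree of an entry of a vector of polynomials. -/
def maxDegree (v : ι → R[X]) : ℕ :=
  univ.sup fun i => (v i).natDegree

lemma natDegree_le_maxDegree (v : ι → R[X]) (i : ι) : (v i).natDegree ≤ maxDegree v :=
  le_sup (f := fun i => (v i).natDegree) (mem_univ i)

lemma maxDegree_le_iff {v : ι → R[X]} {n : ℕ} : maxDegree v ≤ n ↔ ∀ i, (v i).natDegree ≤ n := by
  simp [maxDegree]

lemma maxDegree_eq_of_coeff_ne_zero {v : ι → R[X]} {n : ℕ} (hv : ∀ i, (v i).natDegree ≤ n)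
    (hn : (fun i => (v i).coeff n) ≠ 0) : maxDegree v = n := by
  obtain ⟨i, hi⟩ := Function.ne_iff.mp hn
  exact (maxDegree_le_iff.mpr hv).antisymm
    ((le_natDegree_of_ne_zero hi).trans (natDegree_le_maxDegree v i))

lemma coeff_maxDegree_ne_zero {v : ι → R[X]} (hv : v ≠ 0) :
    (fun i => (v i).coeff (maxDegree v)) ≠ 0 := by
  obtain ⟨j, hj⟩ := Function.ne_iff.mp hv
  obtain ⟨i, -, hi⟩ := exists_mem_eq_sup univ ⟨j, mem_univ j⟩ fun i => (v i).natDegree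
  by_cases hvi : v i = 0
  · have hdeg : maxDegree v = 0 := hi.trans (by simp [hvi])
    have hvj := eq_C_of_natDegree_le_zero (hdeg ▸ natDegree_le_maxDegree v j)
    rw [hdeg]
    exact Function.ne_iff.mpr ⟨j, fun h => hj (hvj.trans (C_eq_zero.mpr h))⟩
  · exact Function.ne_iff.mpr ⟨i, by simpa [maxDegree, hi] using hvi⟩

end Semiring

section Homogeneous

variable {R σ : Type*} [CommSemiring R] {n : ℕ} {v : σ → R[X]}

lemma natDegree_finsuppProd_pow_le (hv : ∀ i, (v i).natDegree ≤ n) (m : σ →₀ ℕ) :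
    (m.prod fun i k => v i ^ k).natDegree ≤ m.degree * n := by
  refine (natDegree_prod_le _ _).trans ?_
  rw [Finsupp.degree_apply, sum_mul]
  exact sum_le_sum fun i _ => natDegree_pow_le_of_le _ (hv i)

lemma coeff_finsuppProd_pow (hv : ∀ i, (v i).natDegree ≤ n) (m : σ →₀ ℕ) :
    (m.prod fun i k => v i ^ k).coeff (m.degree * n) = m.prod fun i k => (v i).coeff n ^ k := by
  induction m using Finsupp.induction_linear with
  | zero => simp
  | single i k => simp [coeff_pow_of_natDegree_le (hv i)]
  | add m₁ m₂ h₁ h₂ =>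
    rw [Finsupp.prod_add_index' (by simp) (by simp [pow_add]), map_add, add_mul,
      coeff_mul_add_eq_of_natDegree_le (natDegree_finsuppProd_pow_le hv m₁)
        (natDegree_finsuppProd_pow_le hv m₂), h₁, h₂,
      Finsupp.prod_add_index' (by simp) (by simp [pow_add])]

variable {p : MvPolynomial σ R} {d : ℕ}

lemma coeff_aeval_of_isHomogeneous (hp : p.IsHomogeneous d) (hv : ∀ i, (v i).natDegree ≤ n) :
    (MvPolynomial.aeval v p).coeff (d * n) = MvPolynomial.eval (fun i => (v i).coeff n) p := by
  rw [MvPolynomial.aeval_def, MvPolynomial.eval₂_eq, MvPolynomial.eval_eq, finsetSum_coeff]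
  refine sum_congr rfl fun m hm => ?_
  have hdeg : d = m.degree := hp.degree_eq_sum_deg_support hm
  rw [hdeg, algebraMap_eq, coeff_C_mul]
  exact congrArg _ (coeff_finsuppProd_pow hv m)

end Homogeneous

end MaxDegree

section Unimodular

variable {R ι : Type*} [CommRing R]

/-- A vector is unimodular if its entries generate the unit ideal. -/
def IsUnimodular (v : ι → R) : Prop :=
  Ideal.span (Set.range v) = ⊤

lemma IsUnimodular.ne_zero [Nontrivial R] {v : ι → R} (hv : IsUnimodular v) : v ≠ 0 := by
  rintro rfl
  rw [IsUnimodular, Ideal.span_eq_bot.mpr (by simp)] at hv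
  exact bot_ne_top hv

lemma isUnimodular_iff_forall_isMaximal {v : ι → R} :
    IsUnimodular v ↔ ∀ M : Ideal R, M.IsMaximal → (Ideal.Quotient.mk M ∘ v) ≠ 0 := by
  have hker (M : Ideal R) : Ideal.Quotient.mk M ∘ v = 0 ↔ Ideal.span (Set.range v) ≤ M := by
    simp [Ideal.span_le, Set.range_subset_iff, funext_iff, Ideal.Quotient.eq_zero_iff_mem]
  simp_rw [IsUnimodular, ne_eq, hker]
  refine ⟨fun h M hM hle => hM.ne_top (top_le_iff.mp (h ▸ hle)), fun h => ?_⟩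
  by_contra hne
  obtain ⟨M, hM, hle⟩ := Ideal.exists_le_maximal _ hne
  exact h M hM hle

lemma exists_isUnimodular_eq_smul [Finite ι] [IsDomain R] [IsPrincipalIdealRing R] {v : ι → R}
    (hv : v ≠ 0) : ∃ (g : R) (u : ι → R), g ≠ 0 ∧ IsUnimodular u ∧ v = g • u := by
  have := Fintype.ofFinite ι
  obtain ⟨g, hg⟩ := IsPrincipalIdealRing.principal (Ideal.span (Set.range v))
  have hg' : Ideal.span (Set.range v) = Ideal.span {g} := hg
  have hdvd (i : ι) : g ∣ v i := by
    rw [← Ideal.mem_span_singleton, ← hg']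
    exact Ideal.subset_span ⟨i, rfl⟩
  choose u hu using hdvd
  have hvu : v = g • u := funext hu
  have hg0 : g ≠ 0 := by
    rintro rfl
    exact hv (by simpa using hvu)
  refine ⟨g, u, hg0, ?_, hvu⟩
  obtain ⟨a, ha⟩ := Ideal.mem_span_range_iff_exists_fun.mp
    (hg' ▸ Ideal.mem_span_singleton_self g : g ∈ Ideal.span (Set.range v))
  refine (Ideal.eq_top_iff_one _).mpr
    (Ideal.mem_span_range_iff_exists_fun.mpr ⟨a, mul_left_cancel₀ hg0 ?_⟩)
  simp_rw [mul_one, mul_sum, mul_left_comm g, ← hu, ha]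

end Unimodular

section Sym2

variable {R : Type*} [CommSemiring R]

/-- The symmetric product of two points of the projective line, as a point of the projective
plane: the coefficients of the product of the two linear forms `v 0 * T + v 1`, `w 0 * T + w 1`. -/
def sym2 (v w : Fin 2 → R) : Fin 3 → R :=
  ![v 0 * w 0, v 0 * w 1 + v 1 * w 0, v 1 * w 1]

lemma sym2_ne_zero [NoZeroDivisors R] {v w : Fin 2 → R} (hv : v ≠ 0) (hw : w ≠ 0) :
    sym2 v w ≠ 0 := by
  contrapose! hw
  have h (i : Fin 3) : sym2 v w i = 0 := congrFun hw i
  have h0 := h 0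
  have h1 := h 1
  have h2 := h 2
  simp only [sym2] at h0 h1 h2
  obtain ⟨i, hi⟩ := Function.ne_iff.mp hv
  ext j
  fin_cases i <;> fin_cases j <;> simp_all

lemma sym2_smul_smul (a b : R) (v w : Fin 2 → R) :
    sym2 (a • v) (b • w) = (a * b) • sym2 v w := by
  ext i
  fin_cases i <;> simp [sym2] <;> ring

lemma comp_sym2 {S : Type*} [CommSemiring S] (f : R →+* S) (v w : Fin 2 → R) :
    f ∘ sym2 v w = sym2 (f ∘ v) (f ∘ w) := by
  ext i
  fin_cases i <;> simp [sym2]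

lemma IsUnimodular.sym2 {R : Type*} [CommRing R] {v w : Fin 2 → R} (hv : IsUnimodular v)
    (hw : IsUnimodular w) : IsUnimodular (sym2 v w) := by
  rw [isUnimodular_iff_forall_isMaximal] at hv hw ⊢
  intro M hM
  rw [comp_sym2]
  exact sym2_ne_zero (hv M hM) (hw M hM)

end Sym2

section Height

variable {F ι : Type*} [Field F]

lemma exists_isUnimodular_eq_smul_algebraMap [Finite ι] {w : ι → RatFunc F} (hw : w ≠ 0) :
    ∃ (c : RatFunc F) (v : ι → F[X]), c ≠ 0 ∧ IsUnimodular v ∧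
      w = c • (algebraMap F[X] (RatFunc F) ∘ v) := by
  obtain ⟨b, hb⟩ := IsLocalization.exist_integer_multiples_of_finite F[X]⁰ w
  choose u hu using hb
  have hb0 : algebraMap F[X] (RatFunc F) b ≠ 0 := by simp
  have huw : algebraMap F[X] (RatFunc F) ∘ u = algebraMap F[X] (RatFunc F) b • w := by
    ext i
    simp [hu, Algebra.smul_def]
  have hu0 : u ≠ 0 := by
    rintro rfl
    exact hw ((smul_eq_zero_iff_right hb0).mp (huw.symm.trans (by ext; simp)))
  obtain ⟨g, v, hg, hv, rfl⟩ := exists_isUnimodular_eq_smul hu0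
  refine ⟨(algebraMap F[X] (RatFunc F) b)⁻¹ * algebraMap F[X] (RatFunc F) g, v, by simp [hg], hv,
    ?_⟩
  rw [← inv_smul_smul₀ hb0 w, ← huw, mul_smul]
  congr 1
  ext i
  simp

/-- The polynomial vector `v` represents the same point of projective space over the field of
rational functions as `w`. -/
def IsPolyRep (v : ι → F[X]) (w : ι → RatFunc F) : Prop :=
  ∃ c : RatFunc F, c ≠ 0 ∧ algebraMap F[X] (RatFunc F) ∘ v = c • w

variable [Fintype ι]

/-- The height over the rational function field of the point of projective space with homogeneous
coordinates `w`, as the least degree of a representative with polynomial coordinates. -/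
noncomputable def height (w : ι → RatFunc F) : ℕ :=
  sInf (maxDegree '' {v : ι → F[X] | IsPolyRep v w})

lemma height_smul {c : RatFunc F} (hc : c ≠ 0) (w : ι → RatFunc F) : height (c • w) = height w := by
  have hset : {v : ι → F[X] | IsPolyRep v (c • w)} = {v | IsPolyRep v w} := by
    ext v
    constructor
    · rintro ⟨b, hb, h⟩
      exact ⟨b * c, mul_ne_zero hb hc, by rw [h, smul_smul]⟩
    · rintro ⟨b, hb, h⟩
      exact ⟨b / c, div_ne_zero hb hc, by rw [h, smul_smul, div_mul_cancel₀ b hc]⟩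
  rw [height, hset, height]

lemma height_le_maxDegree (v : ι → F[X]) :
    height (algebraMap F[X] (RatFunc F) ∘ v) ≤ maxDegree v :=
  Nat.sInf_le ⟨v, ⟨1, one_ne_zero, (one_smul ..).symm⟩, rfl⟩

lemma height_eq_maxDegree {v : ι → F[X]} (hv : IsUnimodular v) :
    height (algebraMap F[X] (RatFunc F) ∘ v) = maxDegree v := by
  refine (height_le_maxDegree v).antisymm
    (le_csInf ⟨_, v, ⟨1, one_ne_zero, (one_smul ..).symm⟩, rfl⟩ ?_)
  rintro _ ⟨u, ⟨c, hc, huv⟩, rfl⟩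
  obtain ⟨a, ha⟩ := Ideal.mem_span_range_iff_exists_fun.mp ((Ideal.eq_top_iff_one _).mp hv)
  have hc' : c = algebraMap F[X] (RatFunc F) (∑ i, a i * u i) := by
    rw [map_sum]
    calc c = c * algebraMap F[X] (RatFunc F) (∑ i, a i * v i) := by rw [ha, map_one, mul_one]
      _ = ∑ i, algebraMap F[X] (RatFunc F) (a i) * (c • algebraMap F[X] (RatFunc F) ∘ v) i := by
        simp [mul_sum, mul_left_comm]
      _ = ∑ i, algebraMap F[X] (RatFunc F) (a i * u i) := by
        simp only [← huv, Function.comp_apply, map_mul]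
  refine maxDegree_le_iff.mpr fun i => le_trans ?_ (natDegree_le_maxDegree u i)
  have hui : u i = (∑ i, a i * u i) * v i := by
    apply RatFunc.algebraMap_injective F
    rw [map_mul, ← hc']
    exact congrFun huv i
  by_cases hvi : v i = 0
  · simp [hvi]
  · rw [hui, natDegree_mul _ hvi]
    · exact Nat.le_add_left ..
    · rintro h
      exact hc (by rw [hc', h, map_zero])

end Height

section HeightBounds

variable {F ι : Type*} [Field F] [Fintype ι]

lemma height_add_natDegree_le_maxDegree {v : ι → F[X]} (hv : v ≠ 0) {g : F[X]}
    (hg : ∀ i, g ∣ v i) :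
    height (algebraMap F[X] (RatFunc F) ∘ v) + g.natDegree ≤ maxDegree v := by
  choose u hu using hg
  obtain rfl : v = g • u := funext hu
  have hg0 : g ≠ 0 := fun h => hv (by simp [h])
  have hu0 : u ≠ 0 := fun h => hv (by simp [h])
  have hsmul : algebraMap F[X] (RatFunc F) ∘ (g • u) =
      algebraMap F[X] (RatFunc F) g • algebraMap F[X] (RatFunc F) ∘ u := by
    ext i
    simp
  rw [hsmul, height_smul (RatFunc.algebraMap_ne_zero hg0)]
  obtain ⟨i, hi⟩ := Function.ne_iff.mp (coeff_maxDegree_ne_zero hu0)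
  have hui : u i ≠ 0 := fun h => hi (by simp [h])
  calc height (algebraMap F[X] (RatFunc F) ∘ u) + g.natDegree
      ≤ (u i).natDegree + g.natDegree := by
        gcongr
        exact (height_le_maxDegree u).trans (le_natDegree_of_ne_zero hi)
    _ = ((g • u) i).natDegree := by
        rw [Pi.smul_apply, smul_eq_mul, natDegree_mul hg0 hui, add_comm]
    _ ≤ maxDegree (g • u) := natDegree_le_maxDegree _ i

lemma natDegree_sym2_le {v w : Fin 2 → F[X]} {m n : ℕ} (hv : ∀ i, (v i).natDegree ≤ m)
    (hw : ∀ i, (w i).natDegree ≤ n) (i : Fin 3) : (sym2 v w i).natDegree ≤ m + n := by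
  fin_cases i
  · exact natDegree_mul_le_of_le (hv 0) (hw 0)
  · exact natDegree_add_le_of_degree_le (natDegree_mul_le_of_le (hv 0) (hw 1))
      (natDegree_mul_le_of_le (hv 1) (hw 0))
  · exact natDegree_mul_le_of_le (hv 1) (hw 1)

lemma coeff_sym2 {v w : Fin 2 → F[X]} {m n : ℕ} (hv : ∀ i, (v i).natDegree ≤ m)
    (hw : ∀ i, (w i).natDegree ≤ n) :
    (fun i => (sym2 v w i).coeff (m + n)) =
      sym2 (fun i => (v i).coeff m) (fun i => (w i).coeff n) := by
  ext i
  fin_cases i <;> simp [sym2, coeff_mul_add_eq_of_natDegree_le, hv, hw]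

lemma maxDegree_sym2 {v w : Fin 2 → F[X]} (hv : v ≠ 0) (hw : w ≠ 0) :
    maxDegree (sym2 v w) = maxDegree v + maxDegree w :=
  maxDegree_eq_of_coeff_ne_zero
    (natDegree_sym2_le (natDegree_le_maxDegree v) (natDegree_le_maxDegree w))
    (coeff_sym2 (natDegree_le_maxDegree v) (natDegree_le_maxDegree w) ▸
      sym2_ne_zero (coeff_maxDegree_ne_zero hv) (coeff_maxDegree_ne_zero hw))

lemma height_sym2 {v w : Fin 2 → RatFunc F} (hv : v ≠ 0) (hw : w ≠ 0) :
    height (sym2 v w) = height v + height w := by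
  obtain ⟨a, v, ha, hv', rfl⟩ := exists_isUnimodular_eq_smul_algebraMap hv
  obtain ⟨b, w, hb, hw', rfl⟩ := exists_isUnimodular_eq_smul_algebraMap hw
  rw [sym2_smul_smul, height_smul (mul_ne_zero ha hb), height_smul ha, height_smul hb,
    ← comp_sym2, height_eq_maxDegree hv', height_eq_maxDegree hw',
    height_eq_maxDegree (hv'.sym2 hw'), maxDegree_sym2 hv'.ne_zero hw'.ne_zero]

end HeightBounds

/-! ### The sum and the difference of two points on the `x`-line -/

section AddSubVec

open WeierstrassCurve

variable {R A : Type*} [CommRing R] [CommRing A] (W : WeierstrassCurve R)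

lemma eval_addSubMap (s t u : R) :
    (fun i => (addSubMap W i).eval ![s, t, u]) =
      ![s ^ 2 - W.b₄ * s * u - W.b₆ * t * u - W.b₈ * u ^ 2,
        2 * t * s + W.b₂ * s * u + W.b₄ * t * u + W.b₆ * u ^ 2,
        t ^ 2 - 4 * s * u] := by
  ext i
  fin_cases i <;> simp [addSubMap]

lemma map_addSubMap (f : R →+* A) (i : Fin 3) :
    addSubMap (W.map f) i = MvPolynomial.map f (addSubMap W i) := by
  have h2 : MvPolynomial.C (f 2) = (MvPolynomial.C 2 : MvPolynomial (Fin 3) A) := by rw [map_ofNat]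
  have h4 : MvPolynomial.C (f 4) = (MvPolynomial.C 4 : MvPolynomial (Fin 3) A) := by rw [map_ofNat]
  fin_cases i <;> simp [addSubMap, h2, h4]

/-- The values of the forms `addSubMap W`, which send the unordered pair of `x`-coordinates of
`P` and `Q` to that of `P + Q` and `P - Q`, in an algebra over the base ring. -/
noncomputable def addSubVec [Algebra R A] (s : Fin 3 → A) : Fin 3 → A :=
  fun i => MvPolynomial.aeval s (addSubMap W i)

variable [Algebra R A]

lemma addSubVec_eq_eval (s : Fin 3 → A) : addSubVec W s =
    fun i => (addSubMap (W.map (algebraMap R A)) i).eval s := by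
  ext i
  rw [addSubVec, map_addSubMap, MvPolynomial.eval_map, MvPolynomial.aeval_def]

lemma addSubVec_ne_zero [W.IsElliptic] [IsReduced A] {s : Fin 3 → A} (hs : s ≠ 0) :
    addSubVec W s ≠ 0 := by
  rw [addSubVec_eq_eval]
  exact addSubMap_ne_zero _ hs

lemma addSubVec_smul (c : A) (s : Fin 3 → A) : addSubVec W (c • s) = c ^ 2 • addSubVec W s := by
  have hs : s = ![s 0, s 1, s 2] := by
    ext i
    fin_cases i <;> rfl
  rw [hs, Matrix.smul_vec3]
  simp_rw [addSubVec_eq_eval, eval_addSubMap, Matrix.smul_vec3, smul_eq_mul]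
  exact Matrix.vec3_eq (by ring) (by ring) (by ring)

lemma comp_addSubVec {B : Type*} [CommRing B] [Algebra R B] (f : A →ₐ[R] B) (s : Fin 3 → A) :
    f ∘ addSubVec W s = addSubVec W (f ∘ s) := by
  ext i
  exact MvPolynomial.comp_aeval_apply ..

lemma IsUnimodular.addSubVec [W.IsElliptic] {s : Fin 3 → A} (hs : IsUnimodular s) :
    IsUnimodular (addSubVec W s) := by
  rw [isUnimodular_iff_forall_isMaximal] at hs ⊢
  intro M hM
  have := comp_addSubVec W (Ideal.Quotient.mkₐ R M) s
  rw [Ideal.Quotient.mkₐ_eq_mk] at this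
  rw [this]
  exact addSubVec_ne_zero W (hs M hM)

end AddSubVec

section HeightAddSub

open WeierstrassCurve

variable {F : Type*} [Field F] (W : WeierstrassCurve F) [W.IsElliptic]

lemma maxDegree_addSubVec {v : Fin 3 → F[X]} (hv : v ≠ 0) :
    maxDegree (addSubVec W v) = 2 * maxDegree v := by
  have hd := natDegree_le_maxDegree v
  refine maxDegree_eq_of_coeff_ne_zero (fun i =>
    MvPolynomial.aeval_natDegree_le _ (isHomogeneous_addSubMap W i).totalDegree_le _ hd) ?_
  simp only [addSubVec, coeff_aeval_of_isHomogeneous (isHomogeneous_addSubMap W _) hd]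
  exact addSubMap_ne_zero W (coeff_maxDegree_ne_zero hv)

theorem height_addSubVec {s : Fin 3 → RatFunc F} (hs : s ≠ 0) :
    height (addSubVec W s) = 2 * height s := by
  obtain ⟨c, v, hc, hv, rfl⟩ := exists_isUnimodular_eq_smul_algebraMap hs
  have hcomp := comp_addSubVec W (IsScalarTower.toAlgHom F F[X] (RatFunc F)) v
  rw [IsScalarTower.coe_toAlgHom'] at hcomp
  rw [addSubVec_smul, ← hcomp, height_smul (pow_ne_zero 2 hc), height_smul hc,
    height_eq_maxDegree hv, height_eq_maxDegree (hv.addSubVec W), maxDegree_addSubVec W hv.ne_zero]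

end HeightAddSub

section AddSubPoint

open WeierstrassCurve WeierstrassCurve.Affine

variable {K : Type*} [Field K] {W : WeierstrassCurve K}

lemma addSubMap_sym2x_zero_left (P : W.toAffine.Point) :
    (fun i => (addSubMap W i).eval (Point.sym2x 0 P)) = P.sym2x (-P) := by
  rw [Point.sym2x_neg_right]
  rcases P with _ | ⟨x, y, h⟩
  · simp [← Point.zero_def, eval_addSubMap]
  · rw [Point.sym2x_zero_some, Point.sym2x_some_some, eval_addSubMap]
    exact Matrix.vec3_eq (by ring) (by ring) (by ring)

variable [DecidableEq K]

lemma exists_addSubMap_sym2x_self_eq_smul (P : W.toAffine.Point) :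
    ∃ k : K, (fun i => (addSubMap W i).eval (P.sym2x P)) = k • (P + P).sym2x 0 := by
  rcases P with _ | ⟨x, y, h⟩
  · exact ⟨1, by simp [← Point.zero_def, eval_addSubMap]⟩
  have hxy := (equation_iff ..).mp h.1
  rw [Point.sym2x_some_some, eval_addSubMap]
  by_cases hy : y = W.toAffine.negY x y
  · refine ⟨(x * x) ^ 2 - W.b₄ * (x * x) - W.b₆ * (x + x) - W.b₈, ?_⟩
    rw [Point.add_self_of_Y_eq hy, Point.sym2x_zero_zero, Matrix.smul_vec3]
    rw [negY] at hy
    exact Matrix.vec3_eq (by simp) (by simp [b₂, b₄, b₆]; grind) (by simp; ring)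
  · have hslope := mul_div_cancel₀ (3 * x ^ 2 + 2 * W.a₂ * x + W.a₄ - W.a₁ * y) (sub_ne_zero.mpr hy)
    refine ⟨(y - W.toAffine.negY x y) ^ 2, ?_⟩
    rw [Point.add_self_of_Y_ne hy, Point.sym2x_some_zero, slope_of_Y_ne rfl hy, addX,
      Matrix.smul_vec3]
    generalize (_ / _ : K) = ℓ at *
    simp only [negY, b₂, b₄, b₆, b₈, smul_eq_mul] at *
    refine Matrix.vec3_eq ?_ ?_ ?_ <;> grind

lemma addSubMap_sym2x_of_ne {x₁ y₁ x₂ y₂ : K} (h₁ : W.toAffine.Nonsingular x₁ y₁)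
    (h₂ : W.toAffine.Nonsingular x₂ y₂) (hx : x₁ ≠ x₂) :
    (fun i => (addSubMap W i).eval ((Point.some x₁ y₁ h₁).sym2x (.some x₂ y₂ h₂))) =
      (x₁ - x₂) ^ 2 •
        (Point.some x₁ y₁ h₁ + .some x₂ y₂ h₂).sym2x (.some x₁ y₁ h₁ - .some x₂ y₂ h₂) := by
  have hxy₁ := (equation_iff ..).mp h₁.1
  have hxy₂ := (equation_iff ..).mp h₂.1
  have hd := sub_ne_zero.mpr hx
  have hX {ℓ y : K} (hℓ : (x₁ - x₂) * ℓ = y) : (x₁ - x₂) ^ 2 * W.toAffine.addX x₁ x₂ ℓ =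
      y ^ 2 + W.a₁ * y * (x₁ - x₂) - (W.a₂ + x₁ + x₂) * (x₁ - x₂) ^ 2 := by
    rw [addX, ← hℓ]
    ring
  have hX₁ := hX (mul_div_cancel₀ (y₁ - y₂) hd)
  have hX₂ := hX (mul_div_cancel₀ (y₁ - W.toAffine.negY x₂ y₂) hd)
  rw [sub_eq_add_neg (Point.some ..), Point.neg_some, Point.add_of_X_ne hx, Point.add_of_X_ne hx,
    Point.sym2x_some_some, Point.sym2x_some_some, slope_of_X_ne hx, slope_of_X_ne hx,
    eval_addSubMap, Matrix.smul_vec3]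
  simp only [negY, b₂, b₄, b₆, b₈, smul_eq_mul] at *
  refine Matrix.vec3_eq (mul_left_cancel₀ (pow_ne_zero 2 hd) ?_) ?_ (by ring)
  · rw [← mul_assoc ((x₁ - x₂) ^ 2) ((x₁ - x₂) ^ 2), mul_mul_mul_comm, hX₁, hX₂]
    clear hX hX₁ hX₂ hd
    grind
  · rw [mul_add (_ ^ 2), hX₁, hX₂]
    clear hX hX₁ hX₂ hd
    grind

theorem exists_addSubMap_sym2x_eq_smul (P Q : W.toAffine.Point) :
    ∃ k : K, (fun i => (addSubMap W i).eval (P.sym2x Q)) = k • (P + Q).sym2x (P - Q) := by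
  by_cases hPQ : P.xRep = Q.xRep
  · rcases Point.xRep_eq_xRep_iff.mp hPQ with rfl | rfl
    · simpa using exists_addSubMap_sym2x_self_eq_smul P
    · simpa [Point.sym2x_neg_left, Point.sym2x_comm 0, ← two_nsmul, ← neg_add', -neg_add_rev]
        using exists_addSubMap_sym2x_self_eq_smul Q
  rcases P with _ | ⟨x₁, y₁, h₁⟩
  · exact ⟨1, by simpa [← Point.zero_def] using addSubMap_sym2x_zero_left Q⟩
  rcases Q with _ | ⟨x₂, y₂, h₂⟩
  · rw [← Point.zero_def, Point.sym2x_comm, addSubMap_sym2x_zero_left]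
    exact ⟨1, by simp⟩
  · exact ⟨_, addSubMap_sym2x_of_ne h₁ h₂ (by simpa using hPQ)⟩

end AddSubPoint

/-! ### Quadratic twists -/

section Twist

open WeierstrassCurve WeierstrassCurve.Affine

variable {R K : Type*} [CommRing R] [Field K] [Algebra R K] (W : WeierstrassCurve R) (l : K)

/-- The quadratic twist by `l` of a curve `y² = x³ + a₂x² + a₄x + a₆`; it has an equation
`l y² = x³ + a₂x² + a₄x + a₆`, whose solution `(x, y)` is the point `(l x, l² y)` here. -/
def quadraticTwist : WeierstrassCurve K where
  a₁ := 0
  a₂ := algebraMap R K W.a₂ * l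
  a₃ := 0
  a₄ := algebraMap R K W.a₄ * l ^ 2
  a₆ := algebraMap R K W.a₆ * l ^ 3

variable {W l}

/-- The homogeneous coordinates of the image of a point of the twist by `l` under the degree two
map to the `x`-line of the original curve. -/
noncomputable def twistXRep (P : (quadraticTwist W l).toAffine.Point) : Fin 2 → K :=
  ![1, l] * P.xRep

lemma twistXRep_ne_zero (hl : l ≠ 0) (P : (quadraticTwist W l).toAffine.Point) :
    twistXRep P ≠ 0 := by
  rcases P with _ | ⟨x, y, h⟩
  · exact Function.ne_iff.mpr ⟨0, by simp [twistXRep, Point.xRep]⟩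
  · exact Function.ne_iff.mpr ⟨1, by simpa [twistXRep]⟩

lemma twistXRep_some {x y : K} (h : (quadraticTwist W l).toAffine.Nonsingular x y) :
    twistXRep (.some x y h) = ![x, l] := by
  ext i
  fin_cases i <;> simp [twistXRep]

lemma sym2_twistXRep (P Q : (quadraticTwist W l).toAffine.Point) :
    sym2 (twistXRep P) (twistXRep Q) = ![1, l, l ^ 2] * P.sym2x Q := by
  ext i
  fin_cases i <;> simp [sym2, twistXRep, Point.sym2x] <;> ring

lemma addSubVec_mul [W.IsCharNeTwoNF] (s : Fin 3 → K) :
    addSubVec W (![1, l, l ^ 2] * s) =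
      ![1, l, l ^ 2] * fun i => (addSubMap (quadraticTwist W l) i).eval s := by
  ext i
  fin_cases i <;> simp [addSubVec, addSubMap, quadraticTwist, b₂, b₄, b₆, b₈, map_ofNat] <;> ring

lemma exists_addSubVec_sym2_twistXRep_eq_smul [W.IsCharNeTwoNF] [DecidableEq K]
    (P Q : (quadraticTwist W l).toAffine.Point) :
    ∃ k : K, addSubVec W (sym2 (twistXRep P) (twistXRep Q)) =
      k • sym2 (twistXRep (P + Q)) (twistXRep (P - Q)) := by
  obtain ⟨k, hk⟩ := exists_addSubMap_sym2x_eq_smul P Q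
  exact ⟨k, by rw [sym2_twistXRep, addSubVec_mul, hk, mul_smul_comm, sym2_twistXRep]⟩

lemma nonsingular_quadraticTwist (h2 : (2 : K) ≠ 0) (hl : l ≠ 0) {x y : K} (hy : y ≠ 0)
    (h : l * y ^ 2 = x ^ 3 + algebraMap R K W.a₂ * x ^ 2 + algebraMap R K W.a₄ * x +
      algebraMap R K W.a₆) :
    (quadraticTwist W l).toAffine.Nonsingular (l * x) (l ^ 2 * y) := by
  rw [nonsingular_iff, equation_iff]
  refine ⟨?_, .inr ?_⟩
  · simp only [quadraticTwist]
    linear_combination l ^ 3 * h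
  · have := mul_ne_zero h2 (mul_ne_zero (pow_ne_zero 2 hl) hy)
    simp only [quadraticTwist]
    grind

lemma ringChar_ne_two_of_isElliptic (W : WeierstrassCurve R) [Nontrivial R] [W.IsElliptic]
    [W.IsCharNeTwoNF] : ringChar R ≠ 2 := by
  intro h
  have h2 : (2 : R) = 0 := by
    simpa [h] using CharP.cast_eq_zero R (ringChar R)
  refine W.isUnit_Δ.ne_zero ?_
  rw [Δ_of_isCharNeTwoNF]
  grind

end Twist

section TwistHeight

open WeierstrassCurve WeierstrassCurve.Affine

variable {F : Type*} [Field F] {W : WeierstrassCurve F} [W.IsElliptic] [W.IsCharNeTwoNF]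
  {l : RatFunc F} [DecidableEq (RatFunc F)]

theorem height_twistXRep_add_add_height_twistXRep_sub (hl : l ≠ 0)
    (P Q : (quadraticTwist W l).toAffine.Point) :
    height (twistXRep (P + Q)) + height (twistXRep (P - Q)) =
      2 * (height (twistXRep P) + height (twistXRep Q)) := by
  obtain ⟨k, hk⟩ := exists_addSubVec_sym2_twistXRep_eq_smul P Q
  have hρ := twistXRep_ne_zero (W := W) hl
  have hs := sym2_ne_zero (hρ P) (hρ Q)
  have hk0 : k ≠ 0 := by
    rintro rfl
    exact addSubVec_ne_zero W hs (hk.trans (zero_smul ..))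
  rw [← height_sym2 (hρ _) (hρ _), ← height_smul hk0, ← hk, height_addSubVec W hs,
    height_sym2 (hρ P) (hρ Q)]

end TwistHeight

section ParallelogramLaw

lemma eq_quadratic_of_second_difference {g : ℤ → ℤ} {c : ℤ}
    (hg : ∀ n, g (n + 1) + g (n - 1) = 2 * g n + 2 * c) (n : ℤ) :
    g n = g 0 + n * (g 1 - g 0 - c) + n ^ 2 * c := by
  suffices H : g n = g 0 + n * (g 1 - g 0 - c) + n ^ 2 * c ∧
      g (n + 1) = g 0 + (n + 1) * (g 1 - g 0 - c) + (n + 1) ^ 2 * c from H.1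
  induction n with
  | zero => grind
  | succ n ih => grind
  | pred n ih => grind

variable {G : Type*} [AddCommGroup G] {h : G → ℤ}

lemma apply_add_zsmul_of_parallelogram (hh : ∀ P Q, h (P + Q) + h (P - Q) = 2 * (h P + h Q))
    (P Q : G) (n : ℤ) : h (P + n • Q) = h P + n * (h (P + Q) - h P - h Q) + n ^ 2 * h Q := by
  have hg (n : ℤ) : h (P + (n + 1) • Q) + h (P + (n - 1) • Q) = 2 * h (P + n • Q) + 2 * h Q := by
    rw [add_zsmul, sub_zsmul, one_zsmul, ← sub_eq_add_neg, ← add_assoc, ← add_sub_assoc, hh,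
      mul_add]
  simpa using eq_quadratic_of_second_difference (g := fun n => h (P + n • Q)) hg n

theorem sq_le_four_mul_of_parallelogram (hh : ∀ P Q, h (P + Q) + h (P - Q) = 2 * (h P + h Q))
    (hnonneg : ∀ P, 0 ≤ h P) (P : G) {Q : G} (hQ : 0 < h Q) :
    (h (P + Q) - h P - h Q) ^ 2 ≤ 4 * h P * h Q := by
  set b := h (P + Q) - h P - h Q
  have h0 : h 0 = 0 := by
    have := hh 0 0
    simp only [add_zero, sub_zero] at this
    linarith
  have hsmul (m : ℤ) : h (m • P) = m ^ 2 * h P := by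
    simpa [h0] using apply_add_zsmul_of_parallelogram hh 0 P m
  have hform (m n : ℤ) : h (m • P + n • Q) = m ^ 2 * h P + n * m * b + n ^ 2 * h Q := by
    have hmb : h (m • P + Q) = h Q + m * (h (P + Q) - h P - h Q) + m ^ 2 * h P := by
      rw [add_comm, apply_add_zsmul_of_parallelogram hh, add_comm Q]
      ring
    rw [apply_add_zsmul_of_parallelogram hh, hsmul, hmb]
    ring
  have hpos := hnonneg ((2 * h Q) • P + (-b) • Q)
  rw [hform] at hpos
  have hdisc : (2 * h Q) ^ 2 * h P + -b * (2 * h Q) * b + (-b) ^ 2 * h Q =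
      h Q * (4 * h P * h Q - b ^ 2) := by ring
  exact sub_nonneg.mp (nonneg_of_mul_nonneg_right (hdisc ▸ hpos) hQ)

theorem sq_le_four_mul_of_add_le_of_sub_le
    (hh : ∀ P Q, h (P + Q) + h (P - Q) = 2 * (h P + h Q)) (hnonneg : ∀ P, 0 ≤ h P) {P Q : G}
    {s : ℤ} (hQ : 0 < h Q) (hadd : h (P + Q) ≤ h P + h Q - s)
    (hsub : h (P - Q) ≤ h P + h Q + s) :
    s ^ 2 ≤ 4 * h P * h Q := by
  have hs : h (P + Q) - h P - h Q = -s := by linarith [hh P Q]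
  simpa [hs] using sq_le_four_mul_of_parallelogram hh hnonneg P hQ

end ParallelogramLaw

/-! ### Hasse's bound -/

section Contact

variable {F : Type*} [Field F] [Fintype F] [DecidableEq F]

/-- The polynomial with a double zero where `quadraticChar F (p x) = ε` and a simple zero where
`p x = 0`. It divides `p * (p ^ (q / 2) - ε) ^ 2`, and its degree gives the character sum of `p`. -/
noncomputable def contactPoly (p : F[X]) (ε : ℤˣ) : F[X] :=
  ∏ x, (X - C x) ^ (1 + ε * quadraticChar F (p.eval x)).toNat

lemma one_add_mul_quadraticChar_mem (ε : ℤˣ) (a : F) :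
    1 + ε * quadraticChar F a ∈ Set.Icc 0 2 := by
  rcases Int.units_eq_one_or ε with rfl | rfl <;>
    rcases quadraticChar_isQuadratic F a with h | h | h <;> simp [h]

lemma natDegree_contactPoly (p : F[X]) (ε : ℤˣ) :
    ((contactPoly p ε).natDegree : ℤ) =
      Fintype.card F + ε * ∑ x, quadraticChar F (p.eval x) := by
  rw [contactPoly, natDegree_prod_of_monic _ _ fun x _ => (monic_X_sub_C x).pow _]
  simp_rw [(monic_X_sub_C _).natDegree_pow, natDegree_X_sub_C, mul_one]
  push_cast
  simp_rw [Int.toNat_of_nonneg (one_add_mul_quadraticChar_mem ε _).1, sum_add_distrib, mul_sum]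
  simp

lemma contactPoly_dvd_of_forall {p g : F[X]} {ε : ℤˣ}
    (h : ∀ x, (X - C x) ^ (1 + ε * quadraticChar F (p.eval x)).toNat ∣ g) :
    contactPoly p ε ∣ g :=
  Finset.prod_dvd_of_coprime
    (fun _ _ _ _ hxy => (isCoprime_X_sub_C_of_isUnit_sub (sub_ne_zero.mpr hxy).isUnit).pow)
    fun x _ => h x

lemma contactPoly_dvd_X_pow_card_sub_X_sq (p : F[X]) (ε : ℤˣ) :
    contactPoly p ε ∣ (X ^ Fintype.card F - X) ^ 2 := by
  refine contactPoly_dvd_of_forall fun x => ?_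
  have hx : X - C x ∣ (X ^ Fintype.card F - X : F[X]) := by
    simp [dvd_iff_isRoot, FiniteField.pow_card]
  exact (pow_dvd_pow _ (Int.toNat_le.mpr (one_add_mul_quadraticChar_mem ε _).2)).trans
    (pow_dvd_pow_of_dvd hx 2)

lemma contactPoly_dvd_mul_sq (hF : ringChar F ≠ 2) (p : F[X]) (ε : ℤˣ) :
    contactPoly p ε ∣ p * (p ^ (Fintype.card F / 2) - C ((ε : ℤ) : F)) ^ 2 := by
  refine contactPoly_dvd_of_forall fun x => ?_
  by_cases hp : p.eval x = 0
  · simpa [hp] using (dvd_iff_isRoot.mpr hp).mul_right _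
  by_cases hε : quadraticChar F (p.eval x) = ε
  · have hx : X - C x ∣ p ^ (Fintype.card F / 2) - C ((ε : ℤ) : F) := by
      rw [dvd_iff_isRoot]
      simp [← quadraticChar_eq_pow_of_char_ne_two' hF, hε]
    simpa [hε, ← Int.cast_mul] using (pow_dvd_pow_of_dvd hx 2).mul_left p
  · have h0 : 1 + ε * quadraticChar F (p.eval x) = 0 := by
      rcases Int.units_eq_one_or ε with rfl | rfl <;>
        rcases quadraticChar_dichotomy hp with h | h <;> simp_all
    rw [h0]
    simp

end Contact

section Cubic

open WeierstrassCurve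

variable {F : Type*} [Field F] (W : WeierstrassCurve F)

/-- The right-hand side of the equation `y² = x³ + a₂x² + a₄x + a₆`. -/
noncomputable def cubicPoly : F[X] :=
  X ^ 3 + C W.a₂ * X ^ 2 + C W.a₄ * X + C W.a₆

lemma natDegree_cubicPoly : (cubicPoly W).natDegree = 3 := by
  rw [cubicPoly]
  compute_degree!

lemma cubicPoly_ne_zero : cubicPoly W ≠ 0 :=
  ne_zero_of_natDegree_gt (n := 0) (by simp [natDegree_cubicPoly])

lemma comp_cubicPoly (x : F[X]) :
    (cubicPoly W).comp x = x ^ 3 + C W.a₂ * x ^ 2 + C W.a₄ * x + C W.a₆ := by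
  simp [cubicPoly]

variable [Fintype F]

/-- Homogeneous coordinates, up to a common factor, of the sum of the point with `x`-coordinate
`X ^ q` and one of the two points with `x`-coordinate `X` on the twist by `cubicPoly W`. -/
noncomputable def frobeniusAddXRep (ε : F) : Fin 2 → F[X] :=
  ![cubicPoly W * (cubicPoly W ^ (Fintype.card F / 2) - C ε) ^ 2 -
      (C W.a₂ + X ^ Fintype.card F + X) * (X ^ Fintype.card F - X) ^ 2,
    (X ^ Fintype.card F - X) ^ 2]

lemma cubicPoly_mul_pow_sq (hF : ringChar F ≠ 2) :
    cubicPoly W * (cubicPoly W ^ (Fintype.card F / 2)) ^ 2 =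
      (cubicPoly W).comp (X ^ Fintype.card F) := by
  have hodd : Odd (Fintype.card F) := Nat.odd_iff.mpr (FiniteField.odd_card_of_char_ne_two hF)
  rw [← pow_mul', ← pow_succ', Nat.two_mul_div_two_add_one_of_odd hodd, ←
    FiniteField.expand_card, expand_eq_comp_X_pow]

lemma frobeniusAddXRep_zero (hF : ringChar F ≠ 2) {ε : F} (hε : ε ^ 2 = 1) :
    frobeniusAddXRep W ε 0 =
      X ^ (2 * Fintype.card F + 1) + X ^ (Fintype.card F + 2) +
        C (2 * W.a₂) * X ^ (Fintype.card F + 1) + C W.a₄ * X ^ Fintype.card F + C W.a₄ * X +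
        C (2 * W.a₆) - C (2 * ε) * cubicPoly W ^ (Fintype.card F / 2 + 1) := by
  have hε' : (C ε : F[X]) ^ 2 = 1 := by rw [← C_pow, hε, C_1]
  have hfrob := cubicPoly_mul_pow_sq W hF
  have hf : cubicPoly W = X ^ 3 + C W.a₂ * X ^ 2 + C W.a₄ * X + C W.a₆ := rfl
  rw [comp_cubicPoly] at hfrob
  simp only [frobeniusAddXRep, Matrix.cons_val_zero, C_mul, C_ofNat, pow_succ _ (_ / 2)]
  linear_combination hfrob + cubicPoly W * hε' + hf

lemma natDegree_frobeniusAddXRep_le (hF : ringChar F ≠ 2) {ε : F} (hε : ε ^ 2 = 1) (i : Fin 2) :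
    (frobeniusAddXRep W ε i).natDegree ≤ 2 * Fintype.card F + 1 := by
  have hq : 1 < Fintype.card F := Fintype.one_lt_card
  fin_cases i
  · have hpow : (cubicPoly W ^ (Fintype.card F / 2 + 1)).natDegree ≤ 2 * Fintype.card F + 1 := by
      refine natDegree_pow_le.trans ?_
      rw [natDegree_cubicPoly]
      have hodd := FiniteField.odd_card_of_char_ne_two hF
      omega
    simp only [Fin.zero_eta, frobeniusAddXRep_zero W hF hε]
    refine (natDegree_sub_le_iff_left ((natDegree_C_mul_le _ _).trans hpow)).mpr ?_
    compute_degree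
    omega
  · simp only [frobeniusAddXRep, Matrix.cons_val_one, Fin.mk_one, Matrix.cons_val_fin_one]
    rw [natDegree_pow, FiniteField.X_pow_card_sub_X_natDegree_eq F hq]
    omega

end Cubic

section Points

open WeierstrassCurve WeierstrassCurve.Affine

lemma twistXRep_some_add_some {R K : Type*} [CommRing R] [Field K] [Algebra R K] [DecidableEq K]
    {W : WeierstrassCurve R} {l x₁ y₁ x₂ y₂ : K} (hl : l ≠ 0)
    (h₁ : (quadraticTwist W l).toAffine.Nonsingular (l * x₁) (l ^ 2 * y₁))
    (h₂ : (quadraticTwist W l).toAffine.Nonsingular (l * x₂) (l ^ 2 * y₂)) (hx : x₁ ≠ x₂) :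
    twistXRep (.some _ _ h₁ + .some _ _ h₂) = (l / (x₁ - x₂) ^ 2) •
      ![l * (y₁ - y₂) ^ 2 - (algebraMap R K W.a₂ + x₁ + x₂) * (x₁ - x₂) ^ 2, (x₁ - x₂) ^ 2] := by
  have hd := sub_ne_zero.mpr hx
  have hlx : l * x₁ ≠ l * x₂ := (mul_right_injective₀ hl).ne hx
  have hslope : (l ^ 2 * y₁ - l ^ 2 * y₂) / (l * x₁ - l * x₂) = l * (y₁ - y₂) / (x₁ - x₂) := by
    rw [← mul_sub, ← mul_sub, pow_two, mul_assoc, mul_div_mul_left _ _ hl]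
  rw [Point.add_of_X_ne hlx, twistXRep_some, addX, slope_of_X_ne hlx, hslope, Matrix.smul_vec2]
  refine congrArg₂ (![·, ·]) ?_ ?_
  · simp only [quadraticTwist, smul_eq_mul]
    field_simp
    ring
  · rw [smul_eq_mul, div_mul_cancel₀ _ (pow_ne_zero 2 hd)]

lemma height_X_pow {F : Type*} [Field F] {n : ℕ} {c : RatFunc F} (hc : c ≠ 0) :
    height ![c * algebraMap F[X] (RatFunc F) (X ^ n), c] = n := by
  have hunimod : IsUnimodular ![(X : F[X]) ^ n, 1] :=
    (Ideal.eq_top_iff_one _).mpr (Ideal.subset_span ⟨1, rfl⟩)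
  have hvec : ![c * algebraMap F[X] (RatFunc F) (X ^ n), c] =
      c • algebraMap F[X] (RatFunc F) ∘ ![X ^ n, 1] := by
    ext i
    fin_cases i <;> simp
  rw [hvec, height_smul hc, height_eq_maxDegree hunimod]
  simp [maxDegree, Fin.univ_succ]

variable {F : Type*} [Field F] (W : WeierstrassCurve F)

section TwistPoint

variable [W.IsElliptic] [W.IsCharNeTwoNF]

/-- The point of the twist of `W` by its own cubic polynomial `f`, over the rational function
field, given by a solution in polynomials of `f y² = f(x)`. -/
noncomputable def twistPoint (x y : F[X]) (hy : y ≠ 0)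
    (h : cubicPoly W * y ^ 2 = (cubicPoly W).comp x) :
    (quadraticTwist W (algebraMap F[X] (RatFunc F) (cubicPoly W))).toAffine.Point :=
  .some (algebraMap F[X] (RatFunc F) (cubicPoly W) * algebraMap F[X] (RatFunc F) x)
    (algebraMap F[X] (RatFunc F) (cubicPoly W) ^ 2 * algebraMap F[X] (RatFunc F) y) <| by
      refine nonsingular_quadraticTwist ?_ ?_ ?_ ?_
      · rw [← map_ofNat (algebraMap F (RatFunc F)), _root_.map_ne_zero]
        exact Ring.two_ne_zero (ringChar_ne_two_of_isElliptic W)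
      · exact RatFunc.algebraMap_ne_zero (cubicPoly_ne_zero W)
      · exact RatFunc.algebraMap_ne_zero hy
      · rw [comp_cubicPoly] at h
        simpa using congrArg (algebraMap F[X] (RatFunc F)) h

variable {W} {x y x₁ y₁ x₂ y₂ : F[X]}

lemma neg_twistPoint (hy : y ≠ 0) (h : cubicPoly W * y ^ 2 = (cubicPoly W).comp x) :
    -twistPoint W x y hy h = twistPoint W x (-y) (neg_ne_zero.mpr hy) (by rwa [neg_sq]) := by
  simp only [twistPoint, Point.neg_some, Point.some.injEq, true_and]
  simp [negY, quadraticTwist]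

lemma height_twistXRep_twistPoint_X_pow {n : ℕ} (hy : y ≠ 0)
    (h : cubicPoly W * y ^ 2 = (cubicPoly W).comp (X ^ n)) :
    height (twistXRep (twistPoint W (X ^ n) y hy h)) = n := by
  rw [twistPoint, twistXRep_some, height_X_pow (RatFunc.algebraMap_ne_zero (cubicPoly_ne_zero W))]

lemma height_twistXRep_twistPoint_add_twistPoint [DecidableEq (RatFunc F)]
    (hy₁ : y₁ ≠ 0) (h₁ : cubicPoly W * y₁ ^ 2 = (cubicPoly W).comp x₁)
    (hy₂ : y₂ ≠ 0) (h₂ : cubicPoly W * y₂ ^ 2 = (cubicPoly W).comp x₂) (hx : x₁ ≠ x₂) :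
    height (twistXRep (twistPoint W x₁ y₁ hy₁ h₁ + twistPoint W x₂ y₂ hy₂ h₂)) =
      height (algebraMap F[X] (RatFunc F) ∘
        ![cubicPoly W * (y₁ - y₂) ^ 2 - (C W.a₂ + x₁ + x₂) * (x₁ - x₂) ^ 2, (x₁ - x₂) ^ 2]) := by
  have hl := RatFunc.algebraMap_ne_zero (cubicPoly_ne_zero W)
  have hφx := (RatFunc.algebraMap_injective F).ne hx
  rw [twistPoint, twistPoint, twistXRep_some_add_some hl _ _ hφx,
    height_smul (div_ne_zero hl (pow_ne_zero 2 (sub_ne_zero.mpr hφx)))]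
  congr 1
  ext i
  fin_cases i <;> simp

end TwistPoint

variable [Fintype F] [DecidableEq F]

lemma height_frobeniusAddXRep_le (hF : ringChar F ≠ 2) (ε : ℤˣ) :
    (height (algebraMap F[X] (RatFunc F) ∘ frobeniusAddXRep W ((ε : ℤ) : F)) : ℤ) ≤
      Fintype.card F + 1 - ε * ∑ x, quadraticChar F ((cubicPoly W).eval x) := by
  have hε : ((ε : ℤ) : F) ^ 2 = 1 := by
    rw [← Int.cast_pow, ← Units.val_pow_eq_pow_val, Int.units_sq, Units.val_one, Int.cast_one]
  have hne : frobeniusAddXRep W ((ε : ℤ) : F) ≠ 0 := fun h =>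
    pow_ne_zero 2 (FiniteField.X_pow_card_sub_X_ne_zero F Fintype.one_lt_card) (congrFun h 1)
  have hdvd (i : Fin 2) : contactPoly (cubicPoly W) ε ∣ frobeniusAddXRep W ((ε : ℤ) : F) i := by
    have hsq := contactPoly_dvd_X_pow_card_sub_X_sq (cubicPoly W) ε
    fin_cases i
    · exact (contactPoly_dvd_mul_sq hF _ ε).sub (hsq.mul_left _)
    · exact hsq
  have hdeg := (height_add_natDegree_le_maxDegree hne hdvd).trans
    (maxDegree_le_iff.mpr (natDegree_frobeniusAddXRep_le W hF hε))
  have := natDegree_contactPoly (cubicPoly W) ε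
  lia

end Points

section Hasse

open WeierstrassCurve WeierstrassCurve.Affine

theorem sq_sum_quadraticChar_eval_cubicPoly_le {F : Type*} [Field F] [Fintype F] [DecidableEq F]
    (W : WeierstrassCurve F) [W.IsElliptic] [W.IsCharNeTwoNF] :
    (∑ x, quadraticChar F ((cubicPoly W).eval x)) ^ 2 ≤ 4 * (Fintype.card F : ℤ) := by
  classical
  have hF := ringChar_ne_two_of_isElliptic W
  have hl := RatFunc.algebraMap_ne_zero (cubicPoly_ne_zero W)
  have hX : (X : F[X]) ^ Fintype.card F ≠ X ^ 1 := by
    simpa [sub_eq_zero] using FiniteField.X_pow_card_sub_X_ne_zero F Fintype.one_lt_card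
  have hε (ε : ℤˣ) : C ((ε : ℤ) : F) ≠ 0 := by
    rcases Int.units_eq_one_or ε with rfl | rfl <;> simp
  have hgen (ε : ℤˣ) : cubicPoly W * C ((ε : ℤ) : F) ^ 2 = (cubicPoly W).comp (X ^ 1) := by
    rcases Int.units_eq_one_or ε with rfl | rfl <;> simp
  set P := twistPoint W (X ^ Fintype.card F) (cubicPoly W ^ (Fintype.card F / 2))
    (pow_ne_zero _ (cubicPoly_ne_zero W)) (cubicPoly_mul_pow_sq W hF)
  set Q := fun ε : ℤˣ => twistPoint W (X ^ 1) (C ((ε : ℤ) : F)) (hε ε) (hgen ε)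
  have hbound (ε : ℤˣ) : (height (twistXRep (P + Q ε)) : ℤ) ≤
      Fintype.card F + 1 - ε * ∑ x, quadraticChar F ((cubicPoly W).eval x) := by
    refine le_trans (le_of_eq ?_) (height_frobeniusAddXRep_le W hF ε)
    rw [height_twistXRep_twistPoint_add_twistPoint _ _ _ _ hX, frobeniusAddXRep, pow_one]
  have hneg : P - Q 1 = P + Q (-1) := by
    rw [sub_eq_add_neg, neg_twistPoint]
    congr 2
    simp
  have hP : height (twistXRep P) = Fintype.card F := height_twistXRep_twistPoint_X_pow _ _
  have hQ : height (twistXRep (Q 1)) = 1 := height_twistXRep_twistPoint_X_pow _ _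
  have hcs := sq_le_four_mul_of_add_le_of_sub_le (h := fun R => (height (twistXRep R) : ℤ))
    (fun R₁ R₂ => mod_cast height_twistXRep_add_add_height_twistXRep_sub hl R₁ R₂)
    (fun _ => Nat.cast_nonneg _) (P := P) (Q := Q 1)
    (s := ∑ x, quadraticChar F ((cubicPoly W).eval x)) (by simp [hQ])
    (by simpa [hP, hQ] using hbound 1) (by simpa [hP, hQ, hneg] using hbound (-1))
  simpa [hP, hQ] using hcs

end Hasse

/-! ### Character sums -/

section CharSum

variable {F : Type*} [Field F] [Fintype F] [DecidableEq F]

lemma abs_quadraticChar_le_one (a : F) : |quadraticChar F a| ≤ 1 := by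
  rcases quadraticChar_isQuadratic F a with h | h | h <;> simp [h]

/-- The sum over `F` of the quadratic character of the monic polynomial with simple roots `s`. -/
def quadraticCharSum (s : Finset F) : ℤ := ∑ x, ∏ a ∈ s, quadraticChar F (x - a)

lemma quadraticCharSum_empty : quadraticCharSum (∅ : Finset F) = Fintype.card F := by
  simp [quadraticCharSum]

lemma quadraticCharSum_singleton (hF : ringChar F ≠ 2) (a : F) : quadraticCharSum {a} = 0 := by
  simp_rw [quadraticCharSum, prod_singleton]
  rw [← quadraticChar_sum_zero hF]
  exact (Equiv.subRight a).sum_comp (quadraticChar F ·)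

lemma quadraticChar_inv_mul_prod_add_inv_sub {a u : F} {t : Finset F} (ha : a ∉ t) (ht : Odd #t) :
    quadraticChar F u⁻¹ * ∏ b ∈ t, quadraticChar F (a + u⁻¹ - b) =
      (∏ b ∈ t, quadraticChar F (a - b)) * (∏ b ∈ t, quadraticChar F (u - (b - a)⁻¹)) -
        if u = 0 then 1 else 0 := by
  have hmul : ∀ b ∈ t, quadraticChar F (a - b) * quadraticChar F (u - (b - a)⁻¹) =
      quadraticChar F ((a - b) * u + 1) := by
    intro b hb
    have hne : b - a ≠ 0 := sub_ne_zero.mpr (ne_of_mem_of_not_mem hb ha)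
    rw [← map_mul, ← neg_sub b a, neg_mul, mul_sub, mul_inv_cancel₀ hne, neg_sub, sub_eq_neg_add,
      neg_mul]
  rw [← prod_mul_distrib, prod_congr rfl hmul]
  rcases eq_or_ne u 0 with rfl | hu
  · simp
  have hfactor (b : F) : quadraticChar F (a + u⁻¹ - b) =
      quadraticChar F u * quadraticChar F ((a - b) * u + 1) := by
    rw [← map_mul, ← one_mul (quadraticChar F (a + u⁻¹ - b)), ← quadraticChar_sq_one' hu, ← map_mul]
    congr 1
    field_simp
    ring
  have hχu : quadraticChar F u⁻¹ * quadraticChar F u ^ #t = 1 := by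
    obtain ⟨k, hk⟩ := ht
    rw [← map_pow, ← map_mul, hk, pow_succ', inv_mul_cancel_left₀ hu, pow_mul',
      quadraticChar_sq_one' (pow_ne_zero k hu)]
  simp_rw [hfactor, prod_mul_distrib, prod_const, ← mul_assoc, hχu]
  simp [hu]

lemma quadraticCharSum_insert_of_odd {a : F} {t : Finset F} (ha : a ∉ t) (ht : Odd #t) :
    quadraticCharSum (insert a t) =
      (∏ b ∈ t, quadraticChar F (a - b)) * quadraticCharSum (t.image fun b => (b - a)⁻¹) - 1 := by
  have hinj : Function.Injective fun b => (b - a)⁻¹ := inv_injective.comp sub_left_injective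
  calc quadraticCharSum (insert a t)
    _ = ∑ u, ∏ b ∈ insert a t, quadraticChar F (a + u⁻¹ - b) :=
      (Equiv.sum_comp (inv_involutive.toPerm.trans (Equiv.addLeft a))
        fun x => ∏ b ∈ insert a t, quadraticChar F (x - b)).symm
    _ = _ := by
      simp_rw [prod_insert ha, add_sub_cancel_left, quadraticChar_inv_mul_prod_add_inv_sub ha ht,
        sum_sub_distrib, ← mul_sum, quadraticCharSum, prod_image hinj.injOn]
      simp

lemma quadraticCharSum_pair (hF : ringChar F ≠ 2) {a b : F} (hab : a ≠ b) :
    quadraticCharSum {a, b} = -1 := by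
  rw [quadraticCharSum_insert_of_odd (by simpa) (by simp), image_singleton,
    quadraticCharSum_singleton hF]
  simp

lemma abs_quadraticCharSum_le_of_card_eq_three (hF : ringChar F ≠ 2) {s : Finset F}
    (hs : #s = 3) : |(quadraticCharSum s : ℝ)| ≤ 2 * √(Fintype.card F) := by
  obtain ⟨a, b, c, hab, hac, hbc, rfl⟩ := card_eq_three.mp hs
  let W : WeierstrassCurve F := ⟨0, -(a + b + c), 0, a * b + b * c + c * a, -(a * b * c)⟩
  have hW : W.IsCharNeTwoNF := ⟨rfl, rfl⟩
  have hΔ : W.Δ = 2 ^ 4 * ((a - b) * (a - c) * (b - c)) ^ 2 := by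
    rw [WeierstrassCurve.Δ_of_isCharNeTwoNF]
    ring
  have hell : W.IsElliptic := by
    refine ⟨hΔ ▸ IsUnit.mk0 _ ?_⟩
    simp [Ring.two_ne_zero hF, sub_ne_zero, hab, hac, hbc]
  have hsum : quadraticCharSum {a, b, c} = ∑ x, quadraticChar F ((cubicPoly W).eval x) := by
    refine sum_congr rfl fun x _ => ?_
    rw [prod_insert (by simp [hab, hac]), prod_pair hbc, ← map_mul, ← map_mul]
    simp only [cubicPoly, W, eval_add, eval_mul, eval_pow, eval_X, eval_C]
    ring_nf
  refine abs_le_of_sq_le_sq ?_ (by positivity)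
  rw [mul_pow, Real.sq_sqrt (Nat.cast_nonneg _), hsum]
  exact_mod_cast sq_sum_quadraticChar_eval_cubicPoly_le W

lemma abs_quadraticCharSum_le_of_card_eq_four (hF : ringChar F ≠ 2) {s : Finset F}
    (hs : #s = 4) : |(quadraticCharSum s : ℝ)| ≤ 2 * √(Fintype.card F) + 1 := by
  obtain ⟨a, t, ha, rfl, ht⟩ := card_eq_succ.mp hs
  have hcard : #(t.image (Inv.inv ∘ (· - a))) = 3 := by
    rw [card_image_of_injective t (inv_injective.comp sub_left_injective), ht]
  have hprod : |((∏ b ∈ t, quadraticChar F (a - b) : ℤ) : ℝ)| ≤ 1 := by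
    rw [← Int.cast_abs, abs_prod]
    exact_mod_cast prod_le_one (fun _ _ => abs_nonneg _) fun _ _ => abs_quadraticChar_le_one _
  rw [quadraticCharSum_insert_of_odd ha (by rw [ht]; decide), Int.cast_sub, Int.cast_mul,
    Int.cast_one]
  calc _ ≤ _ := abs_sub _ _
    _ ≤ 1 * (2 * √(Fintype.card F)) + 1 := by
      rw [abs_mul, abs_one]
      gcongr
      exact abs_quadraticCharSum_le_of_card_eq_three hF hcard
    _ = _ := by rw [one_mul]

section PowSum

lemma sum_quadraticChar_add_mul_quadraticChar_add (hF : ringChar F ≠ 2) (a b : F) :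
    ∑ c, quadraticChar F (a + c) * quadraticChar F (b + c) =
      (if a = b then (Fintype.card F : ℤ) else 0) - 1 := by
  split_ifs with hab
  · subst hab
    have hsq (x : F) : quadraticChar F x * quadraticChar F x = 1 - if x = 0 then 1 else 0 := by
      split_ifs with hx
      · simp [hx]
      · rw [← sq, quadraticChar_sq_one hx, sub_zero]
    refine (Equiv.sum_comp (Equiv.addLeft a)
      fun x => quadraticChar F x * quadraticChar F x).trans ?_
    simp_rw [hsq]
    simp
  · have hpair := quadraticCharSum_pair hF (neg_injective.ne hab)
    simpa [quadraticCharSum, prod_pair (neg_injective.ne hab), add_comm] using hpair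

lemma card_filter_pow_eq_le {R : Type*} [CommRing R] [IsDomain R] [Fintype R] [DecidableEq R]
    {n : ℕ} (hn : 0 < n) (a : R) : #{x | x ^ n = a} ≤ n := by
  have hroots : ({x | x ^ n = a} : Finset R) = (nthRoots n a).toFinset := by
    ext x
    simp [mem_nthRoots hn]
  rw [hroots]
  exact (Multiset.toFinset_card_le _).trans (card_nthRoots n a)

/-- The sum over `F` of the quadratic character of `x (xⁿ + c)`. -/
def quadraticCharPowSum (n : ℕ) (c : F) : ℤ := ∑ x, quadraticChar F x * quadraticChar F (x ^ n + c)

lemma sq_quadraticCharPowSum_mul_pow (n : ℕ) (c : F) {d : F} (hd : d ≠ 0) :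
    quadraticCharPowSum n (c * d ^ n) ^ 2 = quadraticCharPowSum n c ^ 2 := by
  have hscale : quadraticCharPowSum n (c * d ^ n) =
      quadraticChar F d ^ (n + 1) * quadraticCharPowSum n c := by
    simp_rw [quadraticCharPowSum, mul_sum]
    refine (Equiv.sum_comp (Equiv.mulLeft₀ d hd) _).symm.trans (sum_congr rfl fun x _ => ?_)
    rw [Equiv.mulLeft₀_apply, ← map_mul, ← map_mul, ← map_pow, ← map_mul]
    ring_nf
  rw [hscale, mul_pow, ← pow_mul, pow_mul', quadraticChar_sq_one hd, one_pow, one_mul]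

lemma sum_sq_quadraticCharPowSum (hF : ringChar F ≠ 2) (n : ℕ) :
    ∑ c : F, quadraticCharPowSum n c ^ 2 =
      Fintype.card F * ∑ x : F, quadraticChar F x * ∑ y with y ^ n = x ^ n, quadraticChar F y := by
  have hexpand (c : F) : quadraticCharPowSum n c ^ 2 = ∑ x, ∑ y, quadraticChar F x *
      quadraticChar F y * (quadraticChar F (x ^ n + c) * quadraticChar F (y ^ n + c)) := by
    rw [sq, quadraticCharPowSum, sum_mul_sum]
    simp_rw [mul_mul_mul_comm]
  have horth (x y : F) : quadraticChar F x * quadraticChar F y * ∑ c, quadraticChar F (x ^ n + c) *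
      quadraticChar F (y ^ n + c) = Fintype.card F * (quadraticChar F x *
        if y ^ n = x ^ n then quadraticChar F y else 0) -
          quadraticChar F x * quadraticChar F y := by
    rw [sum_quadraticChar_add_mul_quadraticChar_add hF]
    split_ifs <;> grind
  calc ∑ c : F, quadraticCharPowSum n c ^ 2
      = ∑ x, ∑ y, quadraticChar F x * quadraticChar F y *
          ∑ c, quadraticChar F (x ^ n + c) * quadraticChar F (y ^ n + c) := by
        simp_rw [hexpand, mul_sum]
        rw [sum_comm]
        exact sum_congr rfl fun x _ => sum_comm
    _ = _ := by
        simp_rw [horth, sum_sub_distrib, ← mul_sum, quadraticChar_sum_zero hF, sum_filter]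
        simp

lemma sum_sq_quadraticCharPowSum_le (hF : ringChar F ≠ 2) {n : ℕ} (hn : 0 < n) :
    ∑ c : F, quadraticCharPowSum n c ^ 2 ≤ Fintype.card F * (n * (Fintype.card F - 1)) := by
  rw [sum_sq_quadraticCharPowSum hF]
  gcongr
  have hterm (x : F) : quadraticChar F x * ∑ y with y ^ n = x ^ n, quadraticChar F y ≤
      n - if x = 0 then (n : ℤ) else 0 := by
    split_ifs with hx
    · simp [hx]
    rw [sub_zero]
    calc _ ≤ |quadraticChar F x| * ∑ y with y ^ n = x ^ n, |quadraticChar F y| :=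
          (le_abs_self _).trans (by rw [abs_mul]; gcongr; exact abs_sum_le_sum_abs _ _)
      _ ≤ 1 * ∑ y : F with y ^ n = x ^ n, 1 := by
        gcongr <;> exact abs_quadraticChar_le_one _
      _ ≤ n := by simpa using card_filter_pow_eq_le hn (x ^ n)
  refine (sum_le_sum fun x _ => hterm x).trans_eq ?_
  simp [mul_sub, mul_comm]

lemma sum_mul_pow_le {K : Type*} [Field K] [Fintype K] {n : ℕ} (hn : 0 < n) {c : K} (hc : c ≠ 0)
    (s : Finset K) {g : K → ℤ} (hg : ∀ a, 0 ≤ g a) :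
    ∑ d ∈ s, g (c * d ^ n) ≤ n * ∑ a, g a := by
  classical
  have hfiber (a : K) : #{d ∈ s | c * d ^ n = a} ≤ n := by
    refine (card_le_card fun d hd => ?_).trans (card_filter_pow_eq_le hn (c⁻¹ * a))
    have := (mem_filter.mp hd).2
    simp [← this, hc]
  calc ∑ d ∈ s, g (c * d ^ n)
      = ∑ a ∈ s.image (c * · ^ n), #{d ∈ s | c * d ^ n = a} • g a := sum_comp g (c * · ^ n)
    _ ≤ ∑ a ∈ s.image (c * · ^ n), n • g a := by
        gcongr with a
        · exact hg a
        · exact hfiber a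
    _ ≤ ∑ a, n • g a :=
        sum_le_univ_sum_of_nonneg fun a => nsmul_nonneg (hg a) n
    _ = n * ∑ a, g a := by rw [← smul_sum, nsmul_eq_mul]

lemma sq_quadraticCharPowSum_le (hF : ringChar F ≠ 2) {n : ℕ} (hn : 0 < n) {c : F} (hc : c ≠ 0) :
    quadraticCharPowSum n c ^ 2 ≤ n ^ 2 * Fintype.card F := by
  have hq : (0 : ℤ) < Fintype.card F - 1 := by
    have := Fintype.one_lt_card (α := F)
    lia
  have hcard : (#({0}ᶜ : Finset F) : ℤ) = Fintype.card F - 1 := by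
    rw [card_compl, card_singleton, Nat.cast_pred Fintype.card_pos]
  refine le_of_mul_le_mul_left ?_ hq
  calc (Fintype.card F - 1) * quadraticCharPowSum n c ^ 2
      = ∑ d ∈ ({0}ᶜ : Finset F), quadraticCharPowSum n (c * d ^ n) ^ 2 := by
        rw [sum_congr rfl fun d hd => sq_quadraticCharPowSum_mul_pow n c (by simpa using hd),
          sum_const, nsmul_eq_mul, hcard]
    _ ≤ n * ∑ a : F, quadraticCharPowSum n a ^ 2 := sum_mul_pow_le hn hc _ fun _ => sq_nonneg _
    _ ≤ n * (Fintype.card F * (n * (Fintype.card F - 1))) := by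
        gcongr
        exact sum_sq_quadraticCharPowSum_le hF hn
    _ = (Fintype.card F - 1) * (n ^ 2 * Fintype.card F) := by ring

end PowSum

section WeilBound

lemma sum_prod_one_sub_quadraticChar (s : Finset F) :
    ∑ x, ∏ a ∈ s, (1 - quadraticChar F (x - a)) =
      ∑ t ∈ s.powerset, (-1) ^ #t * quadraticCharSum t := by
  simp_rw [sub_eq_add_neg 1 (quadraticChar F _), prod_one_add, prod_neg, quadraticCharSum, mul_sum]
  exact sum_comm

lemma sum_powerset_card {α : Type*} (s : Finset α) :
    2 * ∑ t ∈ s.powerset, #t = #s * 2 ^ #s := by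
  classical
  induction s using Finset.induction_on with
  | empty => simp
  | insert a s ha ih =>
    have hcard : ∀ t ∈ s.powerset, #(insert a t) = #t + 1 := fun t ht =>
      card_insert_of_notMem fun hat => ha (mem_powerset.mp ht hat)
    rw [sum_powerset_insert ha, sum_congr rfl hcard, sum_add_distrib, sum_const, card_powerset,
      card_insert_of_notMem ha, smul_eq_mul, mul_one]
    grind

lemma le_sum_prod_one_sub_quadraticChar {s : Finset F}
    (hs : ∀ t ⊆ s, t.Nonempty → |(quadraticCharSum t : ℝ)| ≤ (#t - 1) * √(Fintype.card F)) :
    Fintype.card F - ((#s / 2 - 1) * 2 ^ #s + 1) * √(Fintype.card F) ≤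
      ((∑ x, ∏ a ∈ s, (1 - quadraticChar F (x - a)) : ℤ) : ℝ) := by
  have hterm : ∀ t ∈ s.powerset, (if t = ∅ then Fintype.card F - √(Fintype.card F) else 0) -
      (#t - 1) * √(Fintype.card F) ≤ (((-1) ^ #t * quadraticCharSum t : ℤ) : ℝ) := by
    intro t ht
    split_ifs with ht0
    · simp [ht0, quadraticCharSum_empty]
    · rw [zero_sub]
      refine neg_le_of_abs_le ?_
      simpa [abs_mul] using hs t (mem_powerset.mp ht) (nonempty_iff_ne_empty.mpr ht0)
  have hcard : 2 * ∑ t ∈ s.powerset, (#t : ℝ) = #s * 2 ^ #s := mod_cast sum_powerset_card s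
  rw [sum_prod_one_sub_quadraticChar, Int.cast_sum]
  refine le_trans (le_of_eq ?_) (sum_le_sum hterm)
  rw [sum_sub_distrib, sum_ite_eq_of_mem' _ _ _ (empty_mem_powerset s), ← sum_mul, sum_sub_distrib,
    sum_const, card_powerset, nsmul_one]
  push_cast
  linear_combination √(Fintype.card F) / 2 * hcard

lemma prod_one_sub_quadraticChar_le (s : Finset F) (x : F) :
    ∏ a ∈ s, (1 - quadraticChar F (x - a)) ≤ 2 ^ #s := by
  rw [← prod_const]
  have hχ (a : F) := abs_le.mp (abs_quadraticChar_le_one (x - a))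
  refine prod_le_prod (fun a _ => ?_) fun a _ => ?_ <;> linarith [hχ a]

theorem le_sum_sdiff_prod_one_sub_quadraticChar {s : Finset F}
    (hs : ∀ t ⊆ s, t.Nonempty → |(quadraticCharSum t : ℝ)| ≤ (#t - 1) * √(Fintype.card F)) :
    Fintype.card F - ((#s / 2 - 1) * 2 ^ #s + 1) * √(Fintype.card F) - #s * 2 ^ #s ≤
      ((∑ x ∈ univ \ s, ∏ a ∈ s, (1 - quadraticChar F (x - a)) : ℤ) : ℝ) := by
  have hin : ((∑ x ∈ s, ∏ a ∈ s, (1 - quadraticChar F (x - a)) : ℤ) : ℝ) ≤ #s * 2 ^ #s := by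
    have := sum_le_card_nsmul s _ _ fun x _ => prod_one_sub_quadraticChar_le s x
    rw [nsmul_eq_mul] at this
    exact_mod_cast this
  rw [sum_sdiff_eq_sub (subset_univ s), Int.cast_sub]
  linarith [le_sum_prod_one_sub_quadraticChar hs]

theorem abs_quadraticCharSum_le_of_card_le_four (hF : ringChar F ≠ 2) {s : Finset F}
    (hs : s.Nonempty) (hs4 : #s ≤ 4) :
    |(quadraticCharSum s : ℝ)| ≤ (#s - 1) * √(Fintype.card F) := by
  have hq : 1 ≤ √(Fintype.card F : ℝ) := Real.one_le_sqrt.mpr (mod_cast Fintype.card_pos)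
  have hpos := hs.card_pos
  interval_cases hcard : #s
  · obtain ⟨a, rfl⟩ := card_eq_one.mp hcard
    simp [quadraticCharSum_singleton hF]
  · obtain ⟨a, b, hab, rfl⟩ := card_eq_two.mp hcard
    rw [quadraticCharSum_pair hF hab]
    norm_num [hq]
  · refine (abs_quadraticCharSum_le_of_card_eq_three hF hcard).trans_eq ?_
    norm_num
  · refine (abs_quadraticCharSum_le_of_card_eq_four hF hcard).trans ?_
    push_cast
    linarith

end WeilBound

end CharSum

section RootsXPowFiveSubX

variable {F : Type*} [Field F]

lemma ringChar_ne_two_of_card_mod_four [Fintype F] (h : Fintype.card F % 4 = 1) :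
    ringChar F ≠ 2 := by
  intro h2
  have := FiniteField.even_card_of_char_two h2
  lia

lemma card_roots_X_pow_five_sub_X [DecidableEq F] {ζ : F} (hF : ringChar F ≠ 2) (hζ : ζ ^ 2 = -1) :
    #({0, 1, -1, ζ, -ζ} : Finset F) = 5 := by
  have h2 : (2 : F) ≠ 0 := Ring.two_ne_zero hF
  rw [card_insert_of_notMem, card_insert_of_notMem, card_insert_of_notMem, card_pair] <;> grind

lemma abs_quadraticCharSum_roots_X_pow_five_sub_X_le [Fintype F] [DecidableEq F] {ζ : F}
    (hF : ringChar F ≠ 2) (hζ : ζ ^ 2 = -1) :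
    |(quadraticCharSum ({0, 1, -1, ζ, -ζ} : Finset F) : ℝ)| ≤ 4 * √(Fintype.card F) := by
  have hsum : quadraticCharSum {0, 1, -1, ζ, -ζ} = quadraticCharPowSum 4 (-1 : F) := by
    refine sum_congr rfl fun x _ => ?_
    have h2 : (2 : F) ≠ 0 := Ring.two_ne_zero hF
    rw [prod_insert, prod_insert, prod_insert, prod_pair]
    · simp_rw [← map_mul]
      congr 1
      linear_combination -x * (x ^ 2 - 1) * hζ
    all_goals grind
  have hsq := sq_quadraticCharPowSum_le hF four_pos (neg_ne_zero.mpr (one_ne_zero (α := F)))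
  rw [hsum]
  refine abs_le_of_sq_le_sq ?_ (by positivity)
  rw [mul_pow, Real.sq_sqrt (Nat.cast_nonneg _)]
  exact_mod_cast hsq

end RootsXPowFiveSubX

/-- For a prime power `q ≡ 1 (mod 4)`, with `C₅ = {0, 1, -1, ζ, -ζ}` where `ζ² = -1`, the
character sum `S(2; q, 5) = ∑_{γ ∈ F_q \ C₅} ∏_{α ∈ C₅} (1 - χ₂(γ - α))` formed with the
quadratic character `χ₂` satisfies `S(2; q, 5) ≥ q - 49 √q - 160`. -/
theorem quadratic_char_sum_lower_bound
    (q : ℕ) (hq : IsPrimePow q) (hq4 : q % 4 = 1)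
    (F : Type*) [Field F] [Fintype F] [DecidableEq F] (hF : Fintype.card F = q)
    (ζ : F) (hζ : ζ ^ 2 = -1) :
    (q : ℝ) - 49 * Real.sqrt q - 160 ≤
      ((∑ γ ∈ univ \ ({0, 1, -1, ζ, -ζ} : Finset F),
        ∏ α ∈ ({0, 1, -1, ζ, -ζ} : Finset F), (1 - quadraticChar F (γ - α)) : ℤ) : ℝ) := by
  subst hF
  have hchar := ringChar_ne_two_of_card_mod_four hq4
  have hcard := card_roots_X_pow_five_sub_X hchar hζ
  have hweil : ∀ t ⊆ ({0, 1, -1, ζ, -ζ} : Finset F), t.Nonempty →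
      |(quadraticCharSum t : ℝ)| ≤ (#t - 1) * √(Fintype.card F) := by
    intro t ht hne
    rcases eq_or_ssubset_of_subset ht with rfl | hlt
    · refine (abs_quadraticCharSum_roots_X_pow_five_sub_X_le hchar hζ).trans_eq ?_
      rw [hcard]
      norm_num
    · refine abs_quadraticCharSum_le_of_card_le_four hchar hne ?_
      have := card_lt_card hlt
      lia
  convert le_sum_sdiff_prod_one_sub_quadraticChar hweil using 2 <;> norm_num [hcard]
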